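/- arXiv:1803.00413 — 2 statements merged into one kernel-verified Lean document; each statement's English description precedes it below -/
import Mathlib

section
/- Let n ≥ 1, let G be a group, and let x : ZMod n → G be a family of elements indexed cyclically such that for every index k there exists an index j with either x(k+1) = x(j) · x(k) · x(j)^{-1} or x(k+1) = x(j)^{-1} · x(k) · x(j) (Wirtinger-type relations). Then there exist indices i, j such that x(i) · x(j) ≠ x(j) · x(i) if and only if there exist indices i ≠ j with x(i) ≠ x(j). Equivalently: the subgroup of G generated by the image of x is commutative if and only if x is constant. -/
/-- Let `G` be a group and `x : ZMod n → G` (`n ≥ 1`) a cyclically indexed family such that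
each `x (k+1)` is conjugate to `x k` by some `x j` or its inverse (Wirtinger-type relations).
Then some pair of the `x i` fails to commute if and only if the family is non-constant,
i.e. `x i ≠ x j` for some `i ≠ j`. -/
theorem wirtinger_noncommutative_iff_nonconstant
    (n : ℕ) [NeZero n] {G : Type*} [Group G] (x : ZMod n → G)
    (hx : ∀ k : ZMod n, ∃ j : ZMod n,
      x (k + 1) = x j * x k * (x j)⁻¹ ∨ x (k + 1) = (x j)⁻¹ * x k * x j) :
    (∃ i j : ZMod n, x i * x j ≠ x j * x i) ↔ ∃ i j : ZMod n, i ≠ j ∧ x i ≠ x j := by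
  constructor
  · rintro ⟨i, j, h⟩
    have hne : x i ≠ x j := fun e => h (by rw [e])
    exact ⟨i, j, fun e => hne (congrArg x e), hne⟩
  · rintro ⟨i, j, -, hij⟩
    by_contra! hcomm
    have step (k : ZMod n) : x (k + 1) = x k := by
      obtain ⟨l, h | h⟩ := hx k
      · rw [h, hcomm l k, mul_inv_cancel_right]
      · rw [h, mul_assoc, hcomm k l, inv_mul_cancel_left]
    have const (m : ℕ) : x (m : ZMod n) = x 0 := by
      induction m with
      | zero => rw [Nat.cast_zero]
      | succ m ih => rw [Nat.cast_succ, step, ih]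
    apply hij
    rw [← ZMod.natCast_zmod_val i, ← ZMod.natCast_zmod_val j, const, const]
end

section
/- Let n ≥ 1, let σ : ZMod n → {+, −} and j : ZMod n → ZMod n be arbitrary (encoding an abstract Wirtinger-type relation system), and consider the system of constraints over real variables a_k, b_k, c_k, d_k for k ∈ ZMod n: (i) a_k^2 + b_k^2 + c_k^2 + d_k^2 = 1 for all k; (ii) for all k, with M_k := [[a_k + b_k·i, c_k + d_k·i], [−c_k + d_k·i, a_k − b_k·i]], the matrix relation M_{k+1}·M_{j(k)} − M_{j(k)}·M_k = 0 holds if σ(k) = +, and M_k·M_{j(k)} − M_{j(k)}·M_{k+1} = 0 holds if σ(k) = −; (iii) \sum_{k}((a_k − a_1)^2 + (b_k − b_1)^2 + (c_k − c_1)^2 + (d_k − d_1)^2) ≠ 0. Then this system has a real solution if and only if there exists a family x : ZMod n → SU(2) satisfying x(k+1) = x(j(k))·x(k)·x(j(k))^{-1} when σ(k) = + and x(k+1) = x(j(k))^{-1}·x(k)·x(j(k)) when σ(k) = −, such that the x(k) generate a non-commutative subgroup of SU(2). -/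
/-- The 2×2 complex matrix `[[a + b·i, c + d·i], [−c + d·i, a − b·i]]` parametrized by
four real numbers. -/
def wirtingerMatrix (a b c d : ℝ) : Matrix (Fin 2) (Fin 2) ℂ :=
  !![(a : ℂ) + b * Complex.I, (c : ℂ) + d * Complex.I;
     -(c : ℂ) + d * Complex.I, (a : ℂ) - b * Complex.I]

theorem wirtingerMatrix_inj {a b c d a₁ b₁ c₁ d₁ : ℝ} :
    wirtingerMatrix a b c d = wirtingerMatrix a₁ b₁ c₁ d₁ ↔
      a = a₁ ∧ b = b₁ ∧ c = c₁ ∧ d = d₁ := by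
  refine ⟨fun h => ?_, by rintro ⟨rfl, rfl, rfl, rfl⟩; rfl⟩
  have h₀ := congrFun (congrFun h 0) 0
  have h₁ := congrFun (congrFun h 0) 1
  simp [wirtingerMatrix, Complex.ext_iff] at h₀ h₁
  exact ⟨h₀.1, h₀.2, h₁.1, h₁.2⟩

theorem wirtingerMatrix_mem_specialUnitaryGroup {a b c d : ℝ}
    (h : a ^ 2 + b ^ 2 + c ^ 2 + d ^ 2 = 1) :
    wirtingerMatrix a b c d ∈ Matrix.specialUnitaryGroup (Fin 2) ℂ := by
  rw [Matrix.mem_specialUnitaryGroup_iff, Matrix.mem_unitaryGroup_iff]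
  constructor
  · ext i k
    fin_cases i <;> fin_cases k <;>
      simp [wirtingerMatrix, Matrix.mul_apply, Fin.sum_univ_two, Matrix.star_apply,
        Complex.ext_iff] <;> (try constructor) <;> linarith
  · simp [wirtingerMatrix, Matrix.det_fin_two, Complex.ext_iff]
    constructor <;> linarith

theorem exists_eq_wirtingerMatrix_of_mem_specialUnitaryGroup {A : Matrix (Fin 2) (Fin 2) ℂ}
    (hA : A ∈ Matrix.specialUnitaryGroup (Fin 2) ℂ) :
    ∃ a b c d : ℝ, a ^ 2 + b ^ 2 + c ^ 2 + d ^ 2 = 1 ∧ A = wirtingerMatrix a b c d := by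
  rw [Matrix.mem_specialUnitaryGroup_iff, Matrix.mem_unitaryGroup_iff] at hA
  obtain ⟨hU, hdet⟩ := hA
  have hadj : A.adjugate = star A :=
    left_inv_eq_right_inv (by rw [Matrix.adjugate_mul, hdet, one_smul]) hU
  rw [Matrix.adjugate_fin_two] at hadj
  have h₀ : A 1 1 = star (A 0 0) := by simpa using congrFun (congrFun hadj 0) 0
  have h₁ : -A 1 0 = star (A 0 1) := by simpa using congrFun (congrFun hadj 1) 0
  have hneg : A 1 0 = -star (A 0 1) := by rw [← h₁, neg_neg]
  refine ⟨(A 0 0).re, (A 0 0).im, (A 0 1).re, (A 0 1).im, ?_, ?_⟩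
  · rw [Matrix.det_fin_two, h₀, hneg] at hdet
    have := congrArg Complex.re hdet
    simp at this
    linarith
  · ext i k
    fin_cases i <;> fin_cases k <;>
      simp [wirtingerMatrix, h₀, hneg, Complex.ext_iff]

theorem sum_sq_sub_ne_zero_iff {ι : Type*} [Fintype ι] (a b c d : ι → ℝ) (i : ι) :
    ∑ k, ((a k - a i) ^ 2 + (b k - b i) ^ 2 + (c k - c i) ^ 2 + (d k - d i) ^ 2) ≠ 0 ↔
      ¬ ∀ k, wirtingerMatrix (a k) (b k) (c k) (d k) =
        wirtingerMatrix (a i) (b i) (c i) (d i) := by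
  rw [Ne, Finset.sum_eq_zero_iff_of_nonneg (fun k _ => by positivity), not_iff_not]
  simp only [Finset.mem_univ, true_imp_iff, wirtingerMatrix_inj]
  refine forall_congr' fun k => ⟨fun h => ?_, ?_⟩
  · refine ⟨?_, ?_, ?_, ?_⟩ <;> rw [← sub_eq_zero, ← sq_eq_zero_iff] <;>
      linarith [sq_nonneg (a k - a i), sq_nonneg (b k - b i), sq_nonneg (c k - c i),
        sq_nonneg (d k - d i)]
  · rintro ⟨h₁, h₂, h₃, h₄⟩
    simp [h₁, h₂, h₃, h₄]

/-- A family satisfying Wirtinger-type relations generates a commutative subgroup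
if and only if it is constant. -/
theorem forall_closure_range_commute_iff_of_wirtinger {G : Type*} [Group G] {n : ℕ} [NeZero n]
    {σ : ZMod n → Bool} {j : ZMod n → ZMod n} {x : ZMod n → G}
    (hx : ∀ k : ZMod n,
      if σ k then x (k + 1) = x (j k) * x k * (x (j k))⁻¹
      else x (k + 1) = (x (j k))⁻¹ * x k * x (j k)) :
    (∀ g ∈ Subgroup.closure (Set.range x), ∀ h ∈ Subgroup.closure (Set.range x),
      g * h = h * g) ↔ ∀ k, x k = x 1 := by
  constructor
  · intro hcomm
    have hmem (k) : x k ∈ Subgroup.closure (Set.range x) :=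
      Subgroup.subset_closure (Set.mem_range_self k)
    have hsucc (k) : x (k + 1) = x k := by
      have hk := hx k
      have hc := hcomm _ (hmem (j k)) _ (hmem k)
      split_ifs at hk
      · rw [hk, hc, mul_inv_cancel_right]
      · rw [hk, mul_assoc, ← hc, inv_mul_cancel_left]
    have hcast (m : ℕ) : x (m : ZMod n) = x 0 := by
      induction m with
      | zero => simp
      | succ m ih => rw [Nat.cast_succ, hsucc, ih]
    have hzero (k) : x k = x 0 := by rw [← ZMod.natCast_zmod_val k, hcast]
    exact fun k => (hzero k).trans (hzero 1).symm
  · intro hconst g hg h hh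
    have hrange : Set.range x ⊆ {x 1} := by
      rintro _ ⟨k, rfl⟩
      exact hconst k
    obtain ⟨p, rfl⟩ := Subgroup.mem_closure_singleton.1 (Subgroup.closure_mono hrange hg)
    obtain ⟨q, rfl⟩ := Subgroup.mem_closure_singleton.1 (Subgroup.closure_mono hrange hh)
    exact ((Commute.refl (x 1)).zpow_zpow p q).eq

theorem unitaryGroup_eq_conj_iff {m : Type*} [Fintype m] [DecidableEq m]
    {u v w : Matrix.unitaryGroup m ℂ} :
    u = v * w * v⁻¹ ↔ (u : Matrix m m ℂ) * v - v * w = 0 := by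
  rw [eq_mul_inv_iff_mul_eq, sub_eq_zero, Subtype.ext_iff]
  rfl

theorem unitaryGroup_eq_inv_conj_iff {m : Type*} [Fintype m] [DecidableEq m]
    {u v w : Matrix.unitaryGroup m ℂ} :
    u = v⁻¹ * w * v ↔ (w : Matrix m m ℂ) * v - v * u = 0 := by
  rw [mul_assoc, eq_inv_mul_iff_mul_eq, sub_eq_zero, Subtype.ext_iff, eq_comm]
  rfl

/-- **Correctness of the Unknot-QE polynomial system.**
Fix `n ≥ 1`, a sign assignment `σ : ZMod n → Bool` (`true` = `+`, `false` = `−`) and an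
index map `j : ZMod n → ZMod n`, encoding an abstract Wirtinger-type relation system.
The real polynomial system in variables `a k, b k, c k, d k` (`k : ZMod n`) consisting of
(i) the unit-norm equations `a k² + b k² + c k² + d k² = 1`,
(ii) the matrix relations `M (k+1)·M (j k) − M (j k)·M k = 0` (sign `+`) resp.
`M k·M (j k) − M (j k)·M (k+1) = 0` (sign `−`) for
`M k := [[a k + b k·i, c k + d k·i], [−c k + d k·i, a k − b k·i]]`, and
(iii) the non-constancy inequality
`∑ k, ((a k − a 1)² + (b k − b 1)² + (c k − c 1)² + (d k − d 1)²) ≠ 0`,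
has a real solution if and only if there is a family `x : ZMod n → SU(2)` satisfying the
Wirtinger relations `x (k+1) = x (j k) · x k · (x (j k))⁻¹` (sign `+`) resp.
`x (k+1) = (x (j k))⁻¹ · x k · x (j k)` (sign `−`), whose members generate a
non-commutative subgroup. -/
theorem unknotQE_system_solvable_iff_noncommutative_su2_rep
    (n : ℕ) [NeZero n] (σ : ZMod n → Bool) (j : ZMod n → ZMod n) :
    (∃ a b c d : ZMod n → ℝ,
      (∀ k : ZMod n, a k ^ 2 + b k ^ 2 + c k ^ 2 + d k ^ 2 = 1) ∧
      (∀ k : ZMod n,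
        if σ k then
          wirtingerMatrix (a (k + 1)) (b (k + 1)) (c (k + 1)) (d (k + 1)) *
              wirtingerMatrix (a (j k)) (b (j k)) (c (j k)) (d (j k)) -
            wirtingerMatrix (a (j k)) (b (j k)) (c (j k)) (d (j k)) *
              wirtingerMatrix (a k) (b k) (c k) (d k) = 0
        else
          wirtingerMatrix (a k) (b k) (c k) (d k) *
              wirtingerMatrix (a (j k)) (b (j k)) (c (j k)) (d (j k)) -
            wirtingerMatrix (a (j k)) (b (j k)) (c (j k)) (d (j k)) *
              wirtingerMatrix (a (k + 1)) (b (k + 1)) (c (k + 1)) (d (k + 1)) = 0) ∧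
      ∑ k : ZMod n,
          ((a k - a 1) ^ 2 + (b k - b 1) ^ 2 + (c k - c 1) ^ 2 + (d k - d 1) ^ 2) ≠ 0)
    ↔
    (∃ x : ZMod n → Matrix.unitaryGroup (Fin 2) ℂ,
      (∀ k : ZMod n,
        (x k : Matrix (Fin 2) (Fin 2) ℂ) ∈ Matrix.specialUnitaryGroup (Fin 2) ℂ) ∧
      (∀ k : ZMod n,
        if σ k then x (k + 1) = x (j k) * x k * (x (j k))⁻¹
        else x (k + 1) = (x (j k))⁻¹ * x k * x (j k)) ∧
      ¬ ∀ g ∈ Subgroup.closure (Set.range x),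
          ∀ h ∈ Subgroup.closure (Set.range x), g * h = h * g) := by
  constructor
  · rintro ⟨a, b, c, d, hnorm, hrel, hne⟩
    have hmem (k) := wirtingerMatrix_mem_specialUnitaryGroup (hnorm k)
    let x : ZMod n → Matrix.unitaryGroup (Fin 2) ℂ := fun k =>
      ⟨_, (Matrix.mem_specialUnitaryGroup_iff.1 (hmem k)).1⟩
    have hx : ∀ k : ZMod n,
        if σ k then x (k + 1) = x (j k) * x k * (x (j k))⁻¹
        else x (k + 1) = (x (j k))⁻¹ * x k * x (j k) := by
      simp only [unitaryGroup_eq_conj_iff, unitaryGroup_eq_inv_conj_iff]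
      exact hrel
    refine ⟨x, hmem, hx, ?_⟩
    rw [forall_closure_range_commute_iff_of_wirtinger hx]
    simp only [Subtype.ext_iff]
    exact (sum_sq_sub_ne_zero_iff a b c d 1).1 hne
  · rintro ⟨x, hmem, hx, hne⟩
    rw [forall_closure_range_commute_iff_of_wirtinger hx] at hne
    choose a b c d hnorm hxeq using
      fun k => exists_eq_wirtingerMatrix_of_mem_specialUnitaryGroup (hmem k)
    refine ⟨a, b, c, d, hnorm, ?_, ?_⟩
    · simpa only [unitaryGroup_eq_conj_iff, unitaryGroup_eq_inv_conj_iff, hxeq] using hx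
    · rw [sum_sq_sub_ne_zero_iff]
      simpa only [Subtype.ext_iff, hxeq] using hne
end
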